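/- arXiv:1504.00354 — 2 statements merged into one kernel-verified Lean document; each statement's English description precedes it below -/
import Mathlib

section
/- Let M be a finite compatible subset of a homogeneous effect algebra E and let a, b ∈ M with b ≤ a. Then M ∪ {a ⊖ b} is a compatible set. -/
/-- An effect algebra: a partial commutative, associative operation `oplus`
(with definedness encoded via `Option`), constants `zero` and `one`,
unique orthosupplements, and `a ⊕ 1` defined only for `a = 0`. -/
structure EffectAlgebra (E : Type*) where
  oplus : E → E → Option E
  zero : E
  one : E
  comm : ∀ a b, oplus a b = oplus b a
  assoc : ∀ a b c ab abc, oplus a b = some ab → oplus ab c = some abc →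
    ∃ bc, oplus b c = some bc ∧ oplus a bc = some abc
  compl_exists : ∀ a, ∃ b, oplus a b = some one
  compl_unique : ∀ a b c, oplus a b = some one → oplus a c = some one → b = c
  add_one : ∀ a b, oplus a one = some b → a = zero

namespace EffectAlgebra

variable {E : Type*} (A : EffectAlgebra E)

/-- `a ⊥ b` : the sum `a ⊕ b` is defined. -/
def Perp (a b : E) : Prop := (A.oplus a b).isSome

/-- `a ≤ b` iff `b = a ⊕ c` for some `c`. -/
def le (a b : E) : Prop := ∃ c, A.oplus a c = some b

/-- The orthosupplement `a'`: the unique `b` with `a ⊕ b = 1`. -/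
noncomputable def compl (a : E) : E :=
  @Classical.epsilon E ⟨A.zero⟩ fun b => A.oplus a b = some A.one

/-- `a ⊖ b` : the unique `c` with `b ⊕ c = a` (defined when `b ≤ a`). -/
noncomputable def ominus (a b : E) : E :=
  @Classical.epsilon E ⟨A.zero⟩ fun c => A.oplus b c = some a

/-- Homogeneity. -/
def Homogeneous : Prop :=
  ∀ u v₁ v₂ s, A.oplus v₁ v₂ = some s → A.le u s → A.le u (A.compl s) →
    ∃ u₁ u₂, A.le u₁ v₁ ∧ A.le u₂ v₂ ∧ A.oplus u₁ u₂ = some u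

/-- Riesz decomposition property. -/
def RDP : Prop :=
  ∀ u v₁ v₂ s, A.oplus v₁ v₂ = some s → A.le u s →
    ∃ u₁ u₂, A.le u₁ v₁ ∧ A.le u₂ v₂ ∧ A.oplus u₁ u₂ = some u

/-- The sum `c₁ ⊕ … ⊕ cₙ` of a finite family (a list); `some s` iff the family
is orthogonal with sum `s`. -/
def sumList : List E → Option E
  | [] => some A.zero
  | x :: xs => (sumList xs).bind fun s => A.oplus x s

/-- The subfamily of `C` indexed by a set of indices `S ⊆ {1,…,n}`. -/
def pickList (C : List E) (S : Finset (Fin C.length)) : List E :=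
  (S.sort (· ≤ ·)).map C.get

/-- `C` is an orthogonal cover of `M`. -/
def IsCoverOf (C : List E) (M : Set E) : Prop :=
  (A.sumList C).isSome ∧
    ∀ a ∈ M, ∃ S : Finset (Fin C.length), A.sumList (pickList C S) = some a

/-- `M` is compatible with covers in `X`: every finite subset of `M` has an
orthogonal cover with range contained in `X`. -/
def CompatWithCoversIn (M X : Set E) : Prop :=
  ∀ F : Finset E, ↑F ⊆ M →
    ∃ C : List E, (∀ c ∈ C, c ∈ X) ∧ A.IsCoverOf C ↑F

/-- `M` is compatible (with covers in `E`). -/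
def Compatible (M : Set E) : Prop := A.CompatWithCoversIn M Set.univ

/-- `M` is internally compatible. -/
def InternallyCompatible (M : Set E) : Prop := A.CompatWithCoversIn M M

/-- `D` is a refinement of `C`: a partition `{P i}` of the index set of `D`
with `C i = ⊕_{j ∈ P i} D j`. -/
def IsRefinement (D C : List E) : Prop :=
  ∃ P : Fin C.length → Finset (Fin D.length),
    (∀ i j, i ≠ j → Disjoint (P i) (P j)) ∧
    (∀ k, ∃ i, k ∈ P i) ∧
    (∀ i, A.sumList (pickList D (P i)) = some (C.get i))

/-- One step of the closure construction `M ↦ M₁`. -/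
def closureStep (M : Set E) : Set E :=
  {x | ∃ y ∈ M, A.le x y ∧ A.le x (A.compl y)} ∪
  {z | ∃ y ∈ M, ∃ x, A.le x y ∧ A.le x (A.compl y) ∧ A.oplus x z = some y}

/-- The sets `Mₙ`. -/
def closureSeq (M : Set E) (n : ℕ) : Set E := (A.closureStep)^[n] M

/-- The closure `M̄ = ⋃ₙ Mₙ`. -/
def closure (M : Set E) : Set E := ⋃ n, A.closureSeq M n

/-- `B` is a sub-effect algebra of `E`. -/
def IsSubEA (B : Set E) : Prop :=
  A.one ∈ B ∧ ∀ a ∈ B, ∀ b ∈ B, A.le b a → A.ominus a b ∈ B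

/-- The Riesz decomposition property for (the effect algebra on) a subset `B`. -/
def RDPOn (B : Set E) : Prop :=
  ∀ u v₁ v₂ s, u ∈ B → v₁ ∈ B → v₂ ∈ B → A.oplus v₁ v₂ = some s → A.le u s →
    ∃ u₁ u₂, u₁ ∈ B ∧ u₂ ∈ B ∧ A.le u₁ v₁ ∧ A.le u₂ v₂ ∧ A.oplus u₁ u₂ = some u

/-- Homogeneity for (the effect algebra on) a subset `B`. -/
def HomogeneousOn (B : Set E) : Prop :=
  ∀ u v₁ v₂ s, u ∈ B → v₁ ∈ B → v₂ ∈ B → A.oplus v₁ v₂ = some s →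
    A.le u s → A.le u (A.compl s) →
    ∃ u₁ u₂, u₁ ∈ B ∧ u₂ ∈ B ∧ A.le u₁ v₁ ∧ A.le u₂ v₂ ∧ A.oplus u₁ u₂ = some u

/-- A block: a maximal sub-effect algebra satisfying the Riesz decomposition
property. -/
def IsBlock (B : Set E) : Prop :=
  A.IsSubEA B ∧ A.RDPOn B ∧
    ∀ B', A.IsSubEA B' → A.RDPOn B' → B ⊆ B' → B' = B

/-- A block of the sub-effect algebra on `F`: a maximal sub-effect algebra of
`F` satisfying the Riesz decomposition property. -/
def IsBlockIn (F B : Set E) : Prop :=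
  B ⊆ F ∧ A.IsSubEA B ∧ A.RDPOn B ∧
    ∀ B', B' ⊆ F → A.IsSubEA B' → A.RDPOn B' → B ⊆ B' → B' = B

/-- `a` is sharp: the infimum `a ∧ a'` exists and equals `0`, i.e. every common
lower bound of `a` and `a'` is `0`. -/
def Sharp (a : E) : Prop :=
  ∀ b, A.le b a → A.le b (A.compl a) → b = A.zero

/-- `a` is sharp in the sub-effect algebra on `F`. -/
def SharpIn (F : Set E) (a : E) : Prop :=
  a ∈ F ∧ ∀ b ∈ F, A.le b a → A.le b (A.compl a) → b = A.zero

/-- `a` is principal. -/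
def Principal (a : E) : Prop :=
  ∀ x y s, A.le x a → A.le y a → A.oplus x y = some s → A.le s a

/-- `a` is principal in the sub-effect algebra on `B`. -/
def PrincipalIn (B : Set E) (a : E) : Prop :=
  a ∈ B ∧ ∀ x ∈ B, ∀ y ∈ B, ∀ s, A.le x a → A.le y a →
    A.oplus x y = some s → A.le s a

/-- `a` is central: principal, and every `b` has a unique decomposition
`b = b₁ ⊕ b₂` with `b₁ ≤ a`, `b₂ ≤ a'`. -/
def Central (a : E) : Prop :=
  A.Principal a ∧ ∀ b, ∃! p : E × E,
    A.le p.1 a ∧ A.le p.2 (A.compl a) ∧ A.oplus p.1 p.2 = some b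

/-- `a` is central in the sub-effect algebra on `B`. -/
def CentralIn (B : Set E) (a : E) : Prop :=
  A.PrincipalIn B a ∧ ∀ b ∈ B, ∃! p : E × E,
    p.1 ∈ B ∧ p.2 ∈ B ∧ A.le p.1 a ∧ A.le p.2 (A.compl a) ∧
      A.oplus p.1 p.2 = some b

/-- The center `C(E)`. -/
def center : Set E := {a | A.Central a}

/-- The compatibility center `K(E)`: the intersection of all blocks. -/
def compatCenter : Set E := {x | ∀ B, A.IsBlock B → x ∈ B}

end EffectAlgebra

/-!
Adjoining an absorbing undefined element turns an effect algebra into a total commutative monoid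
in which defined sums cancel.

Let `c` be an orthogonal cover of a finite subset containing `a = ⊕_S c` and `b = ⊕_R c`, and
suppose `b ⊕ d = a`. Cancelling the part indexed by `S ∩ R` gives `x ⊕ d = y` with
`x = ⊕_{R \ S} c` and `y = ⊕_{S \ R} c`. The index sets are disjoint, so `x ⊥ y`; as also `x ≤ y`,
homogeneity distributes `x` over the summands of `y`, writing `cᵢ = vᵢ ⊕ wᵢ` with
`x = ⊕_{S \ R} v`. Cancelling `x` leaves `d = ⊕_{S \ R} w`, so the family of all `vᵢ` and `wᵢ`
covers `d` in addition to everything that `c` covers.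
-/

namespace EffectAlgebra

variable {E : Type*} {A : EffectAlgebra E} {ι : Type*}

theorem oplus_zero (A : EffectAlgebra E) (a : E) : A.oplus a A.zero = some a := by
  obtain ⟨b, hb⟩ := A.compl_exists A.one
  obtain rfl : b = A.zero := A.add_one b A.one (by rw [A.comm, hb])
  obtain ⟨a', ha'⟩ := A.compl_exists a
  rw [A.comm] at ha'
  obtain ⟨d, had, hd⟩ := A.assoc _ _ _ _ _ ha' hb
  rw [had, A.compl_unique a' a d ha' hd]

/-- The totalization of an effect algebra: the commutative monoid obtained by adjoining an absorbing
undefined element `none`. It makes `Finset.sum` available for partial sums, and an equation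
between a sum and an element of `E` says in particular that the sum is defined. -/
def Totalization (_A : EffectAlgebra E) : Type _ := Option E

namespace Totalization

/-- The inclusion of an effect algebra into its totalization, registered as a coercion. -/
@[coe] def of (x : E) : A.Totalization := some x

instance : CoeTail E A.Totalization := ⟨of⟩

instance : Zero A.Totalization := ⟨of A.zero⟩

instance : Add A.Totalization :=
  ⟨fun x y => Option.bind x fun a => Option.bind y fun b => A.oplus a b⟩

theorem coe_zero : (A.zero : A.Totalization) = 0 := rfl

theorem coe_add_coe_eq_coe {a b c : E} :
    (a : A.Totalization) + b = c ↔ A.oplus a b = some c := Iff.rfl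

protected theorem add_comm (x y : A.Totalization) : x + y = y + x := by
  rcases x with _ | a <;> rcases y with _ | b
  · rfl
  · rfl
  · rfl
  · exact A.comm a b

theorem add_assoc_of_eq_coe {x y z : A.Totalization} {s : E} (h : x + y + z = s) :
    x + (y + z) = s := by
  obtain ⟨ab, hab, habc⟩ := Option.bind_eq_some_iff.1 h
  obtain ⟨a, rfl, ha⟩ := Option.bind_eq_some_iff.1 hab
  obtain ⟨b, rfl, hb⟩ := Option.bind_eq_some_iff.1 ha
  obtain ⟨c, rfl, hc⟩ := Option.bind_eq_some_iff.1 habc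
  obtain ⟨bc, hbc, hs⟩ := A.assoc a b c ab s hb hc
  exact (congrArg (of a + ·) hbc).trans hs

protected theorem add_assoc (x y z : A.Totalization) : x + y + z = x + (y + z) := by
  refine Option.ext fun s => ⟨add_assoc_of_eq_coe, fun h => ?_⟩
  change x + (y + z) = of s at h
  change x + y + z = of s
  rw [Totalization.add_comm, Totalization.add_comm y] at h
  rw [Totalization.add_comm, Totalization.add_comm x]
  exact add_assoc_of_eq_coe h

protected theorem add_zero (x : A.Totalization) : x + 0 = x := by
  rcases x with _ | a
  · rfl
  · exact A.oplus_zero a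

instance : AddCommMonoid A.Totalization where
  add_assoc := Totalization.add_assoc
  add_comm := Totalization.add_comm
  zero_add x := (Totalization.add_comm 0 x).trans x.add_zero
  add_zero := Totalization.add_zero
  nsmul := nsmulRec

/-- An element of the totalization is defined if it comes from the effect algebra, so that `a ⊥ b`
reads `(a + b).IsDefined`. -/
def IsDefined (x : A.Totalization) : Prop := ∃ a : E, x = a

theorem isDefined_coe (a : E) : (a : A.Totalization).IsDefined := ⟨a, rfl⟩

theorem IsDefined.left {x y : A.Totalization} (h : (x + y).IsDefined) : x.IsDefined := by
  obtain ⟨s, hs⟩ := h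
  obtain ⟨a, ha, -⟩ := Option.bind_eq_some_iff.1 hs
  exact ⟨a, ha⟩

theorem IsDefined.right {x y : A.Totalization} (h : (x + y).IsDefined) : y.IsDefined :=
  IsDefined.left (add_comm x y ▸ h)

theorem IsDefined.sum_of_subset {f : ι → A.Totalization} {S T : Finset ι}
    (hT : (∑ i ∈ T, f i).IsDefined) (hST : S ⊆ T) : (∑ i ∈ S, f i).IsDefined := by
  classical
  rw [← Finset.sum_sdiff hST] at hT
  exact hT.right

theorem IsDefined.exists_add_eq_one {x : A.Totalization} (h : x.IsDefined) :
    ∃ y, x + y = (A.one : A.Totalization) := by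
  obtain ⟨a, rfl⟩ := h
  obtain ⟨b, hb⟩ := A.compl_exists a
  exact ⟨b, coe_add_coe_eq_coe.2 hb⟩

theorem eq_of_add_eq_one {x y z : A.Totalization} (hy : x + y = (A.one : A.Totalization))
    (hz : x + z = (A.one : A.Totalization)) : y = z := by
  have hxy : (x + y).IsDefined := ⟨A.one, hy⟩
  have hxz : (x + z).IsDefined := ⟨A.one, hz⟩
  obtain ⟨a, rfl⟩ := hxy.left
  obtain ⟨b, rfl⟩ := hxy.right
  obtain ⟨c, rfl⟩ := hxz.right
  rw [A.compl_unique a b c (coe_add_coe_eq_coe.1 hy) (coe_add_coe_eq_coe.1 hz)]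

theorem IsDefined.add_left_cancel {x y z : A.Totalization} (h : (x + y).IsDefined)
    (hyz : x + y = x + z) : y = z := by
  obtain ⟨r, hr⟩ := h.exists_add_eq_one
  apply eq_of_add_eq_one (x := x + r)
  · rw [add_right_comm, hr]
  · rw [add_right_comm, ← hyz, hr]

theorem eq_zero_of_add_eq_zero {x y : A.Totalization} (h : x + y = 0) : x = 0 := by
  have hx : x.IsDefined := IsDefined.left ⟨A.zero, h⟩
  obtain ⟨a, rfl⟩ := hx
  have h_one : (a : A.Totalization) + (A.one : A.Totalization) + y = (A.one : A.Totalization) := by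
    rw [add_right_comm, h, zero_add]
  obtain ⟨s, hs⟩ := IsDefined.left ⟨A.one, h_one⟩
  rw [A.add_one a s (coe_add_coe_eq_coe.1 hs), coe_zero]

theorem sum_sdiff_add_eq_sum_sdiff [DecidableEq ι] {f : ι → A.Totalization} {S T : Finset ι}
    {d : A.Totalization} (hT : (∑ i ∈ T, f i).IsDefined)
    (h : ∑ i ∈ S, f i + d = ∑ i ∈ T, f i) :
    ∑ i ∈ S \ T, f i + d = ∑ i ∈ T \ S, f i := by
  have h_inter : ∑ i ∈ T ∩ S, f i + ∑ i ∈ T \ S, f i =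
      ∑ i ∈ T ∩ S, f i + (∑ i ∈ S \ T, f i + d) := by
    rw [Finset.sum_inter_add_sum_sdiff, ← add_assoc, Finset.inter_comm,
      Finset.sum_inter_add_sum_sdiff, h]
  rw [← Finset.sum_inter_add_sum_sdiff T S] at hT
  exact (hT.add_left_cancel h_inter).symm

theorem le_of_coe_add_eq_coe {a b : E} {x : A.Totalization} (h : a + x = b) : A.le a b := by
  obtain ⟨c, rfl⟩ := IsDefined.right ⟨b, h⟩
  exact ⟨c, coe_add_coe_eq_coe.1 h⟩

theorem coe_add_coe_compl (a : E) :
    (a : A.Totalization) + (A.compl a : A.Totalization) = (A.one : A.Totalization) :=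
  coe_add_coe_eq_coe.2 <|
    Classical.epsilon_spec (p := fun b => A.oplus a b = some A.one) (A.compl_exists a)

theorem le_compl_of_isDefined_add {a b : E} (h : ((a : A.Totalization) + b).IsDefined) :
    A.le a (A.compl b) := by
  obtain ⟨r, hr⟩ := h.exists_add_eq_one
  have hb : (b : A.Totalization) + (a + r) = (A.one : A.Totalization) := by
    rw [← add_assoc, add_comm (b : A.Totalization), hr]
  exact le_of_coe_add_eq_coe (eq_of_add_eq_one hb (coe_add_coe_compl b))

end Totalization

open Totalization

theorem Homogeneous.exists_add_eq_of_isDefined_add (hA : A.Homogeneous) {u v₁ v₂ : E}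
    {r : A.Totalization} (hr : u + r = v₁ + v₂)
    (hu : ((u : A.Totalization) + (v₁ + v₂)).IsDefined) :
    ∃ u₁ u₂ w₁ w₂ : E, (u₁ : A.Totalization) + u₂ = u ∧
      (u₁ : A.Totalization) + w₁ = v₁ ∧ (u₂ : A.Totalization) + w₂ = v₂ := by
  obtain ⟨s, hs⟩ := hu.right
  rw [hs] at hr hu
  obtain ⟨u₁, u₂, ⟨w₁, hw₁⟩, ⟨w₂, hw₂⟩, hu₁₂⟩ :=
    hA u v₁ v₂ s (coe_add_coe_eq_coe.1 hs) (le_of_coe_add_eq_coe hr) (le_compl_of_isDefined_add hu)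
  exact ⟨u₁, u₂, w₁, w₂, coe_add_coe_eq_coe.2 hu₁₂, coe_add_coe_eq_coe.2 hw₁,
    coe_add_coe_eq_coe.2 hw₂⟩

theorem Homogeneous.exists_sum_eq_of_isDefined_add (hA : A.Homogeneous) (c : ι → E) (T : Finset ι)
    {u : E} {r : A.Totalization} (hr : u + r = ∑ i ∈ T, (c i : A.Totalization))
    (hu : (u + ∑ i ∈ T, (c i : A.Totalization)).IsDefined) :
    ∃ v w : ι → E, (∀ i, (v i : A.Totalization) + w i = c i) ∧
      ∑ i ∈ T, (v i : A.Totalization) = u := by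
  classical
  induction T using Finset.induction_on generalizing u r with
  | empty =>
    refine ⟨fun _ => A.zero, c, fun i => ?_, ?_⟩
    · rw [coe_zero, zero_add]
    · rw [Finset.sum_empty, eq_zero_of_add_eq_zero hr]
  | insert i T hi ih =>
    rw [Finset.sum_insert hi] at hr hu
    obtain ⟨s, hs⟩ := hu.right.right
    rw [hs] at hr hu
    obtain ⟨u₁, u₂, w₁, w₂, hu₁₂, hw₁, hw₂⟩ := hA.exists_add_eq_of_isDefined_add hr hu
    have hu₂ : ((u₂ : A.Totalization) + s).IsDefined := by
      rw [← hu₁₂, add_add_add_comm] at hu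
      exact hu.right
    rw [← hs] at hw₂ hu₂
    obtain ⟨v, w, hvw, hv⟩ := ih hw₂ hu₂
    refine ⟨Function.update v i u₁, Function.update w i w₁, fun j => ?_, ?_⟩
    · obtain rfl | hji := eq_or_ne j i
      · simpa only [Function.update_self] using hw₁
      · simpa only [Function.update_of_ne hji] using hvw j
    · have hv_update : ∑ j ∈ T, (Function.update v i u₁ j : A.Totalization) = u₂ := by
        rw [← hv]
        refine Finset.sum_congr rfl fun j hj => ?_
        rw [Function.update_of_ne (ne_of_mem_of_not_mem hj hi)]
      rw [Finset.sum_insert hi, Function.update_self, hv_update, hu₁₂]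

/-- Orthogonal covers by families over an arbitrary finite index type; `IsCoverOf` is the case of
families given as lists. -/
def IsOrthogonalCover [Fintype ι] (A : EffectAlgebra E) (c : ι → E) (N : Set E) : Prop :=
  (∑ i, (c i : A.Totalization)).IsDefined ∧
    ∀ a ∈ N, ∃ S : Finset ι, ∑ i ∈ S, (c i : A.Totalization) = a

theorem sumList_eq_some_iff {L : List E} {s : E} :
    A.sumList L = some s ↔ (L.map of).sum = (s : A.Totalization) := by
  induction L generalizing s with
  | nil => exact Iff.rfl
  | cons x L ih =>
    rw [List.map_cons, List.sum_cons]
    constructor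
    · intro h
      obtain ⟨t, ht, hs⟩ := Option.bind_eq_some_iff.1 h
      rw [ih.1 ht]
      exact coe_add_coe_eq_coe.2 hs
    · intro h
      obtain ⟨t, ht⟩ := IsDefined.right ⟨s, h⟩
      rw [ht] at h
      exact Option.bind_eq_some_iff.2 ⟨t, ih.2 ht, coe_add_coe_eq_coe.1 h⟩

theorem sumList_eq_some_iff_sum_get {C : List E} {s : E} :
    A.sumList C = some s ↔ ∑ i, (C.get i : A.Totalization) = s := by
  rw [sumList_eq_some_iff, ← Fin.sum_univ_fun_getElem]
  rfl

theorem sumList_pickList_eq_some_iff {C : List E} {S : Finset (Fin C.length)} {s : E} :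
    A.sumList (pickList C S) = some s ↔ ∑ i ∈ S, (C.get i : A.Totalization) = s := by
  rw [sumList_eq_some_iff, pickList, List.map_map, ← Multiset.sum_coe, ← Multiset.map_coe,
    Finset.sort_eq]
  rfl

theorem isCoverOf_iff_isOrthogonalCover_get {C : List E} {N : Set E} :
    A.IsCoverOf C N ↔ A.IsOrthogonalCover C.get N := by
  simp only [IsCoverOf, IsOrthogonalCover, IsDefined, sumList_pickList_eq_some_iff,
    Option.isSome_iff_exists]
  simp only [sumList_eq_some_iff_sum_get]

namespace IsOrthogonalCover

variable {κ : Type*} [Fintype ι] [Fintype κ] {c : ι → E} {N : Set E}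

theorem comp_equiv (h : A.IsOrthogonalCover c N) (e : κ ≃ ι) :
    A.IsOrthogonalCover (c ∘ e) N := by
  refine ⟨?_, fun a ha => ?_⟩
  · simpa only [Function.comp_apply, e.sum_comp fun i => (c i : A.Totalization)] using h.1
  · obtain ⟨S, hS⟩ := h.2 a ha
    refine ⟨S.map e.symm.toEmbedding, ?_⟩
    simpa only [Finset.sum_map, Function.comp_apply, Equiv.coe_toEmbedding,
      Equiv.apply_symm_apply] using hS

theorem exists_isCoverOf (h : A.IsOrthogonalCover c N) : ∃ C : List E, A.IsCoverOf C N := by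
  let e := Fintype.equivFin ι
  let C := List.ofFn (c ∘ e.symm)
  have hC : C.get = c ∘ ((finCongr List.length_ofFn).trans e.symm) := by
    funext i
    exact List.get_ofFn _ i
  exact ⟨C, isCoverOf_iff_isOrthogonalCover_get.2 (hC ▸ h.comp_equiv _)⟩

theorem insert_of_sum_eq (h : A.IsOrthogonalCover c N) {d : E} {S : Finset ι}
    (hS : ∑ i ∈ S, (c i : A.Totalization) = d) : A.IsOrthogonalCover c (insert d N) :=
  ⟨h.1, Set.forall_mem_insert.2 ⟨⟨S, hS⟩, h.2⟩⟩

theorem sumElim (h : A.IsOrthogonalCover c N) {v w : ι → E}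
    (hvw : ∀ i, (v i : A.Totalization) + w i = c i) :
    A.IsOrthogonalCover (Sum.elim v w) N := by
  have h_sum (S : Finset ι) : ∑ k ∈ S.disjSum S, ((Sum.elim v w k : E) : A.Totalization) =
      ∑ i ∈ S, (c i : A.Totalization) := by
    simp only [Finset.sum_disjSum, Sum.elim_inl, Sum.elim_inr, ← Finset.sum_add_distrib, hvw]
  refine ⟨?_, fun a ha => ?_⟩
  · rw [← Finset.univ_disjSum_univ, h_sum]
    exact h.1
  · obtain ⟨S, hS⟩ := h.2 a ha
    exact ⟨S.disjSum S, (h_sum S).trans hS⟩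

theorem exists_insert (h : A.IsOrthogonalCover c N) (hA : A.Homogeneous) {a b d : E}
    (ha : a ∈ N) (hb : b ∈ N) (hd : (b : A.Totalization) + d = a) :
    ∃ c' : ι ⊕ ι → E, A.IsOrthogonalCover c' (insert d N) := by
  classical
  obtain ⟨S, hS⟩ := h.2 a ha
  obtain ⟨R, hR⟩ := h.2 b hb
  have h_diff : ∑ i ∈ R \ S, (c i : A.Totalization) + d = ∑ i ∈ S \ R, (c i : A.Totalization) :=
    sum_sdiff_add_eq_sum_sdiff (hS ▸ isDefined_coe a) (by rw [hR, hS, hd])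
  have h_perp : (∑ i ∈ R \ S, (c i : A.Totalization) +
      ∑ i ∈ S \ R, (c i : A.Totalization)).IsDefined := by
    rw [← Finset.sum_union disjoint_sdiff_sdiff]
    exact h.1.sum_of_subset (Finset.subset_univ _)
  obtain ⟨x, hx⟩ := h_perp.left
  rw [hx] at h_diff h_perp
  obtain ⟨v, w, hvw, hv⟩ := hA.exists_sum_eq_of_isDefined_add c (S \ R) h_diff h_perp
  have hw : ∑ i ∈ S \ R, (w i : A.Totalization) = d := by
    refine (IsDefined.add_left_cancel (h_diff ▸ h_perp.right) ?_).symm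
    rw [h_diff, ← hv, ← Finset.sum_add_distrib]
    exact Finset.sum_congr rfl fun i _ => (hvw i).symm
  refine ⟨Sum.elim v w, (h.sumElim hvw).insert_of_sum_eq
    (S := (∅ : Finset ι).disjSum (S \ R)) ?_⟩
  simpa only [Finset.sum_disjSum, Finset.sum_empty, zero_add, Sum.elim_inr] using hw

end IsOrthogonalCover

theorem oplus_ominus {a b : E} (h : A.le b a) : A.oplus b (A.ominus a b) = some a :=
  Classical.epsilon_spec (p := fun c => A.oplus b c = some a) h

end EffectAlgebra

open EffectAlgebra Totalization in
theorem compatible_union_ominus_general {E : Type*} (A : EffectAlgebra E)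
    (hH : A.Homogeneous) (M : Set E) (hM : A.Compatible M)
    (a b : E) (ha : a ∈ M) (hb : b ∈ M) (hba : A.le b a) :
    A.Compatible (M ∪ {A.ominus a b}) := by
  classical
  intro F hF
  have h_sub : ↑(insert a (insert b (F.erase (A.ominus a b)))) ⊆ M := by
    rw [Finset.coe_insert, Finset.coe_insert, Finset.coe_erase]
    rw [Set.union_comm, ← Set.sdiff_subset_iff] at hF
    exact Set.insert_subset ha (Set.insert_subset hb hF)
  obtain ⟨C, -, hC⟩ := hM _ h_sub
  obtain ⟨c, hc⟩ := (isCoverOf_iff_isOrthogonalCover_get.1 hC).exists_insert hH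
    (by simp) (by simp) (coe_add_coe_eq_coe.2 (oplus_ominus hba))
  obtain ⟨D, hD⟩ := hc.exists_isCoverOf
  refine ⟨D, fun _ _ => Set.mem_univ _, hD.1, fun x hx => hD.2 x ?_⟩
  grind

/-- If `M` is a finite compatible subset of a homogeneous effect
algebra and `a, b ∈ M` with `b ≤ a`, then `M ∪ {a ⊖ b}` is compatible. -/
theorem compatible_union_ominus {E : Type*} (A : EffectAlgebra E)
    (hH : A.Homogeneous) (M : Finset E) (hM : A.Compatible ↑M)
    (a b : E) (ha : a ∈ M) (hb : b ∈ M) (hba : A.le b a) :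
    A.Compatible (↑M ∪ {A.ominus a b}) := by
  exact compatible_union_ominus_general A hH M hM a b ha hb hba
end

section
/- Let E be a homogeneous effect algebra and let F be a sub-effect algebra of E such that F = F̄, where the closure F̄ is taken in E. Then F (with the restricted partial operation) is a homogeneous effect algebra. -/
namespace EffectAlgebra

variable {E : Type*} {A : EffectAlgebra E} {a b c s u v₁ v₂ x y : E}

theorem oplus_compl (A : EffectAlgebra E) (a : E) : A.oplus a (A.compl a) = some A.one :=
  Classical.epsilon_spec (p := fun b => A.oplus a b = some A.one) (A.compl_exists a)

theorem compl_eq_of_oplus_eq_one (h : A.oplus a b = some A.one) : A.compl a = b :=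
  A.compl_unique a _ _ (A.oplus_compl a) h

theorem le_of_oplus_left (h : A.oplus a b = some s) : A.le a s :=
  ⟨b, h⟩

theorem le_of_oplus_right (h : A.oplus a b = some s) : A.le b s :=
  ⟨a, (A.comm b a).trans h⟩

protected theorem le_trans (hab : A.le a b) (hbc : A.le b c) : A.le a c := by
  obtain ⟨x, hx⟩ := hab
  obtain ⟨y, hy⟩ := hbc
  obtain ⟨z, -, hz⟩ := A.assoc a x y b c hx hy
  exact ⟨z, hz⟩

theorem compl_le_compl (hab : A.le a b) : A.le (A.compl b) (A.compl a) := by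
  obtain ⟨x, hx⟩ := hab
  obtain ⟨y, hy, hay⟩ := A.assoc a x (A.compl b) b A.one hx (A.oplus_compl b)
  rw [compl_eq_of_oplus_eq_one hay]
  exact le_of_oplus_right hy

/-- The point is that `uᵢ ≤ vᵢ'` comes for free: `uᵢ ≤ u ≤ (v₁ ⊕ v₂)' ≤ vᵢ'`. -/
theorem Homogeneous.exists_decomposition_le_compl (hA : A.Homogeneous)
    (hs : A.oplus v₁ v₂ = some s) (hus : A.le u s) (hus' : A.le u (A.compl s)) :
    ∃ u₁ u₂, (A.le u₁ v₁ ∧ A.le u₁ (A.compl v₁)) ∧ (A.le u₂ v₂ ∧ A.le u₂ (A.compl v₂)) ∧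
      A.oplus u₁ u₂ = some u := by
  obtain ⟨u₁, u₂, hu₁, hu₂, hu⟩ := hA u v₁ v₂ s hs hus hus'
  have le_compl {w v : E} (hwu : A.le w u) (hvs : A.le v s) : A.le w (A.compl v) :=
    EffectAlgebra.le_trans hwu (EffectAlgebra.le_trans hus' (compl_le_compl hvs))
  exact ⟨u₁, u₂, ⟨hu₁, le_compl (le_of_oplus_left hu) (le_of_oplus_left hs)⟩,
    ⟨hu₂, le_compl (le_of_oplus_right hu) (le_of_oplus_right hs)⟩, hu⟩

theorem mem_closure_of_le_of_le_compl {M : Set E} (hy : y ∈ M) (hxy : A.le x y)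
    (hxy' : A.le x (A.compl y)) : x ∈ A.closure M :=
  Set.mem_iUnion.2 ⟨1, Or.inl ⟨y, hy, hxy, hxy'⟩⟩

end EffectAlgebra

theorem closed_subalgebra_homogeneous_general {E : Type*} {A : EffectAlgebra E}
    (hA : A.Homogeneous) {F : Set E}
    (hF : ∀ y ∈ F, ∀ x, A.le x y → A.le x (A.compl y) → x ∈ F) :
    A.HomogeneousOn F := by
  intro u v₁ v₂ s _ hv₁ hv₂ hs hus hus'
  obtain ⟨u₁, u₂, ⟨hu₁, hu₁'⟩, ⟨hu₂, hu₂'⟩, hu⟩ := hA.exists_decomposition_le_compl hs hus hus'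
  exact ⟨u₁, u₂, hF v₁ hv₁ u₁ hu₁ hu₁', hF v₂ hv₂ u₂ hu₂ hu₂', hu₁, hu₂, hu⟩

/-- A sub-effect algebra `F` of a homogeneous effect algebra with
`F = F̄` is homogeneous. -/
theorem closed_subalgebra_homogeneous {E : Type*} (A : EffectAlgebra E)
    (hH : A.Homogeneous) (F : Set E) (hF : A.IsSubEA F)
    (hcl : F = A.closure F) :
    A.HomogeneousOn F := by
  exact closed_subalgebra_homogeneous_general hH fun _ hy _ hxy hxy' =>
    hcl.symm.subset (EffectAlgebra.mem_closure_of_le_of_le_compl hy hxy hxy')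
end
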